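/- (Code construction / coding theorem) For all λ, τ ∈ (0,1) there exist δ > 0 and a constant K (depending only on λ, τ, a and d) such that: for every classical–quantum channel W from a finite alphabet X with |X| = a into the density operators on ℂ^d, every probability distribution P on X, every positive integer n, and every subset A ⊆ X^n with P^{⊗n}(A) ≥ τ, there exists an (n,λ)-code (f,D) with f(m) ∈ A and Tr D_m ≤ Tr Π^n_{W,δ}(f(m)) for all m ∈ M, and |M| ≥ exp₂(n·I(P;W) − K·√n). -/

import Mathlib

open Matrix BigOperators Finset
open scoped Classical ComplexOrder

noncomputable section

/-- Square complex matrices of size `d` (operators on `ℂ^d`). -/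
abbrev Mat (d : ℕ) := Matrix (Fin d) (Fin d) ℂ

/-- Operators on the `n`-fold tensor power `(ℂ^d)^{⊗n}`, indexed by `Fin n → Fin d`. -/
abbrev MatPow (d n : ℕ) := Matrix (Fin n → Fin d) (Fin n → Fin d) ℂ

/-- Tensor product `A 0 ⊗ A 1 ⊗ ⋯ ⊗ A (n-1)` of a family of `d × d` matrices. -/
def tensorPow {d n : ℕ} (A : Fin n → Mat d) : MatPow d n :=
  Matrix.of fun j k => ∏ i, A i (j i) (k i)

/-- Exponential to base 2. -/
def exp2 (t : ℝ) : ℝ := (2 : ℝ) ^ t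

/-- `P` is a probability distribution on the finite set `X`. -/
def IsProbDist {X : Type*} [Fintype X] (P : X → ℝ) : Prop :=
  (∀ x, 0 ≤ P x) ∧ ∑ x, P x = 1

/-- `ρ` is a density operator (a state): positive semidefinite with trace one. -/
def IsState {ι : Type*} [Fintype ι] [DecidableEq ι] (ρ : Matrix ι ι ℂ) : Prop :=
  ρ.PosSemidef ∧ ρ.trace = 1

/-- `N(x|x^n)`: number of occurrences of the letter `x` in the sequence `xs`. -/
def countIn {X : Type*} {n : ℕ} (x : X) (xs : Fin n → X) : ℕ :=
  (Finset.univ.filter fun i => xs i = x).card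

/-- The variance-typical set `T^n_{P,δ}`. -/
def typicalSet {X : Type*} [Fintype X] (n : ℕ) (P : X → ℝ) (δ : ℝ) :
    Finset (Fin n → X) :=
  Finset.univ.filter fun xs => ∀ x : X,
    |(countIn x xs : ℝ) - n * P x| ≤ δ * Real.sqrt n * Real.sqrt (P x * (1 - P x))

/-- Product (i.i.d.) probability `P^{⊗n}(A)` of a set `A` of sequences. -/
def prodProb {X : Type*} [Fintype X] {n : ℕ} (P : X → ℝ) (A : Finset (Fin n → X)) : ℝ :=
  ∑ xs ∈ A, ∏ i, P (xs i)

/-- Shannon entropy to base 2. -/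
def shannonEntropy {X : Type*} [Fintype X] (P : X → ℝ) : ℝ :=
  -∑ x, P x * Real.logb 2 (P x)

/-- von Neumann entropy to base 2, `H(ρ) = -Tr(ρ log₂ ρ)`, via the eigenvalues. -/
def vnEntropy {d : ℕ} (ρ : Mat d) : ℝ :=
  if h : ρ.IsHermitian then -∑ i, h.eigenvalues i * Real.logb 2 (h.eigenvalues i) else 0

/-- The constant `K = 2 log₂(e) / e`. -/
def Kconst : ℝ := 2 * Real.logb 2 (Real.exp 1) / Real.exp 1

/-- A diagonalization `ρ = Σ_j R j • π j` into one-dimensional mutually orthogonal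
eigenprojectors, with eigenvalue list `R` a probability distribution. -/
def IsDiagonalization {d : ℕ} (ρ : Mat d) (R : Fin d → ℝ) (π : Fin d → Mat d) : Prop :=
  (∀ j, (π j).PosSemidef) ∧ (∀ j, π j * π j = π j) ∧ (∀ j, (π j).trace = 1) ∧
    (∀ j k, j ≠ k → π j * π k = 0) ∧ (∑ j, π j = 1) ∧
    ρ = ∑ j, (R j : ℂ) • π j ∧ IsProbDist R

/-- The variance-typical projector `Π^n_{ρ,δ}` of a state with fixed diagonalization
`(R, π)`. -/
def typicalProj {d : ℕ} (n : ℕ) (R : Fin d → ℝ) (π : Fin d → Mat d) (δ : ℝ) : MatPow d n :=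
  ∑ js ∈ typicalSet n R δ, tensorPow fun i => π (js i)

/-- `B` is an `η`-shadow of the state `σ`: `0 ≤ B ≤ 1` and `Tr(σB) ≥ η`. -/
def IsShadow {ι : Type*} [Fintype ι] [DecidableEq ι] (σ B : Matrix ι ι ℂ) (η : ℝ) : Prop :=
  B.PosSemidef ∧ ((1 : Matrix ι ι ℂ) - B).PosSemidef ∧ η ≤ (Matrix.trace (σ * B)).re

/-- Average state `PW = Σ_x P(x) W_x` of a cq-channel under input distribution `P`. -/
def avgState {X : Type*} [Fintype X] {d : ℕ} (P : X → ℝ) (W : X → Mat d) : Mat d :=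
  ∑ x, (P x : ℂ) • W x

/-- Conditional von Neumann entropy `H(W|P) = Σ_x P(x) H(W_x)`. -/
def condEntropy {X : Type*} [Fintype X] {d : ℕ} (P : X → ℝ) (W : X → Mat d) : ℝ :=
  ∑ x, P x * vnEntropy (W x)

/-- Mutual information `I(P;W) = H(PW) − H(W|P)`. -/
def mutualInfo {X : Type*} [Fintype X] {d : ℕ} (P : X → ℝ) (W : X → Mat d) : ℝ :=
  vnEntropy (avgState P W) - condEntropy P W

/-- Capacity `C(W) = max_P I(P;W)`. -/
def capacity {X : Type*} [Fintype X] {d : ℕ} (W : X → Mat d) : ℝ :=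
  sSup {c | ∃ P : X → ℝ, IsProbDist P ∧ c = mutualInfo P W}

/-- `(f, D)` (with message set `M` inside the outcome index set `M'`) is an
`(n,λ)`-code for the cq-channel `W`: the `D m` are positive semidefinite, sum to the
identity, and each message is decoded correctly with probability at least `1 - λ`. -/
def IsCode {X : Type*} [Fintype X] {d n : ℕ} (W : X → Mat d) (lam : ℝ)
    {M' : Type*} [Fintype M'] (M : Finset M') (f : M' → Fin n → X)
    (D : M' → MatPow d n) : Prop :=
  (∀ m, (D m).PosSemidef) ∧ (∑ m, D m = 1) ∧
    ∀ m ∈ M, 1 - lam ≤ (Matrix.trace (tensorPow (fun i => W (f m i)) * D m)).re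

/-- `N(n,λ)`: maximal size of an `(n,λ)`-code for `W`. -/
def maxCodeSize {X : Type*} [Fintype X] (d : ℕ) (W : X → Mat d) (n : ℕ) (lam : ℝ) : ℕ :=
  sSup {k | ∃ (M' : Type) (_ : Fintype M') (M : Finset M') (f : M' → Fin n → X)
    (D : M' → MatPow d n), IsCode W lam M f D ∧ M.card = k}

/-- Trace norm `‖A‖₁ = Tr|A|`: the sum of the singular values. -/
def traceNorm {ι : Type*} [Fintype ι] [DecidableEq ι] (A : Matrix ι ι ℂ) : ℝ :=
  ∑ i, Real.sqrt ((Matrix.posSemidef_conjTranspose_mul_self A).1.eigenvalues i)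

/-- Trace distance `D(ρ,σ) = ½‖ρ−σ‖₁`. -/
def traceDist {ι : Type*} [Fintype ι] [DecidableEq ι] (ρ σ : Matrix ι ι ℂ) : ℝ :=
  traceNorm (ρ - σ) / 2

/-- (Pure-state) fidelity `F(ρ,σ) = Tr(ρσ)`. -/
def fidelity {ι : Type*} [Fintype ι] [DecidableEq ι] (ρ σ : Matrix ι ι ℂ) : ℝ :=
  (Matrix.trace (ρ * σ)).re

/-- A pure state: the rank-one orthogonal projector `|ψ⟩⟨ψ|` onto the span of a
unit vector `ψ`. -/
def IsPureState {ι : Type*} [Fintype ι] (ρ : Matrix ι ι ℂ) : Prop :=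
  ∃ ψ : ι → ℂ, (∑ i, star (ψ i) * ψ i) = 1 ∧ ρ = Matrix.vecMulVec ψ (star ψ)

/-- The set of eigenvalue-index sequences `js` that are variance-typical, with
constant `δ`, for the distribution `q x` on each block `I_x = {i : xs i = x}`. -/
def condTypicalSet {X : Type*} [Fintype X] {n d : ℕ} (xs : Fin n → X)
    (q : X → Fin d → ℝ) (δ : ℝ) : Finset (Fin n → Fin d) :=
  Finset.univ.filter fun js => ∀ (x : X) (k : Fin d),
    |((Finset.univ.filter fun i => xs i = x ∧ js i = k).card : ℝ) - (countIn x xs : ℝ) * q x k|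
      ≤ δ * Real.sqrt (countIn x xs) * Real.sqrt (q x k * (1 - q x k))

/-- Conditional variance-typical projector `Π^n_{W,δ}(x^n) = ⊗_{x∈X} Π^{I_x}_{W_x,δ}`,
with respect to fixed diagonalizations `W_x = Σ_j (q x j) • (π x j)`. -/
def condTypicalProj {X : Type*} [Fintype X] {d : ℕ} {n : ℕ} (xs : Fin n → X)
    (q : X → Fin d → ℝ) (π : X → Fin d → Mat d) (δ : ℝ) : MatPow d n :=
  ∑ js ∈ condTypicalSet xs q δ, tensorPow fun i => π (xs i) (js i)

/-!
Codewords are chosen greedily. Let `B` be the sum of the decoding operators found so far. If `B`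
has expectation below `λ² / 9` in the state of some admissible word `x^n`, then
`(1 - B) Π (1 - B)`, with `Π` the conditionally typical projector of `x^n`, still detects `x^n`
with error at most `λ`, fits below `1 - B`, and has no larger trace than `Π`; so `x^n` becomes the
next codeword.

When no such word is left, averaging over the admissible words shows that `B` has expectation
bounded below in `(PW)^{⊗n}`. The eigenvalues of this state are at most
`exp₂(-n H(PW) + O(√n))` up to small total mass, whence `Tr B ≥ exp₂(n H(PW) - O(√n))`. On the
other hand, admitting only those words of `A` whose letter entropies average to about `H(W|P)`
makes every summand of `B` have trace at most `exp₂(n H(W|P) + O(√n))`, and the quotient bounds the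
number of codewords. All the `O(√n)` terms come from Chebyshev's inequality.
-/

section ProductDistribution

open MeasureTheory ProbabilityTheory

variable {ι Y : Type*} [Fintype Y]

lemma IsProbDist.le_one {p : Y → ℝ} (hp : IsProbDist p) (y : Y) : p y ≤ 1 :=
  hp.2 ▸ single_le_sum (fun z _ => hp.1 z) (mem_univ y)

lemma IsProbDist.one_sub_le_sum {p : Y → ℝ} (hp : IsProbDist p) {S T : Finset Y}
    (hST : ∀ y, y ∉ S → y ∈ T) {ε : ℝ} (hT : ∑ y ∈ T, p y ≤ ε) : 1 - ε ≤ ∑ y ∈ S, p y := by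
  have h_compl : ∑ y ∈ Sᶜ, p y ≤ ∑ y ∈ T, p y :=
    sum_le_sum_of_subset_of_nonneg (fun y hy => hST y (mem_compl.1 hy)) fun y _ _ => hp.1 y
  rw [← hp.2, ← sum_add_sum_compl S]
  linarith

lemma IsProbDist.sum_mul_le {p g : Y → ℝ} (hp : IsProbDist p) {C : ℝ}
    (hg : ∀ y, g y ≤ C) : ∑ y, p y * g y ≤ C := by
  calc ∑ y, p y * g y ≤ ∑ y, p y * C :=
        sum_le_sum fun y _ => mul_le_mul_of_nonneg_left (hg y) (hp.1 y)
    _ = C := by rw [← sum_mul, hp.2, one_mul]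

lemma sum_filter_exists_le {κ : Type*} [Fintype κ] {w : Y → ℝ} (hw : ∀ y, 0 ≤ w y)
    (bad : κ → Y → Prop) :
    ∑ y with ∃ k, bad k y, w y ≤ ∑ k, ∑ y with bad k y, w y := by
  simp only [sum_filter]
  rw [sum_comm]
  refine sum_le_sum fun y _ => ?_
  have h_nonneg (k : κ) : 0 ≤ if bad k y then w y else 0 := ite_nonneg (hw y) le_rfl
  split_ifs with h
  · obtain ⟨k, hk⟩ := h
    calc w y = if bad k y then w y else 0 := (if_pos hk).symm
      _ ≤ _ := single_le_sum (f := fun k => if bad k y then w y else 0)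
        (fun k _ => h_nonneg k) (mem_univ k)
  · exact sum_nonneg fun k _ => h_nonneg k

lemma IsProbDist.pi [Fintype ι] [DecidableEq ι] {p : ι → Y → ℝ} (hp : ∀ i, IsProbDist (p i)) :
    IsProbDist fun ys : ι → Y => ∏ i, p i (ys i) :=
  ⟨fun _ => prod_nonneg fun i _ => (hp i).1 _, by
    rw [← Fintype.prod_sum]
    exact prod_eq_one fun i _ => (hp i).2⟩

/-- A distribution given by real weights as a `PMF`, giving access to Mathlib's measure-theoretic
Chebyshev inequality. -/
def IsProbDist.toPMF {p : Y → ℝ} (hp : IsProbDist p) : PMF Y :=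
  PMF.ofFintype (fun y => ENNReal.ofReal (p y)) <| by
    rw [← ENNReal.ofReal_sum_of_nonneg fun y _ => hp.1 y, hp.2, ENNReal.ofReal_one]

section Measure

variable [MeasurableSpace Y] [MeasurableSingletonClass Y]

lemma IsProbDist.integral_toPMF {p : Y → ℝ} (hp : IsProbDist p) (g : Y → ℝ) :
    ∫ y, g y ∂hp.toPMF.toMeasure = ∑ y, p y * g y := by
  simp only [PMF.integral_eq_sum, toPMF, PMF.ofFintype_apply, ENNReal.toReal_ofReal (hp.1 _),
    smul_eq_mul]

lemma IsProbDist.variance_toPMF {p : Y → ℝ} (hp : IsProbDist p) (g : Y → ℝ) :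
    Var[g; hp.toPMF.toMeasure] = ∑ y, p y * g y ^ 2 - (∑ y, p y * g y) ^ 2 := by
  rw [variance_eq_sub MemLp.of_discrete, ← hp.integral_toPMF, ← hp.integral_toPMF]
  rfl

lemma measureReal_pi_toPMF [Fintype ι] {p : ι → Y → ℝ}
    (hp : ∀ i, IsProbDist (p i)) (S : Finset (ι → Y)) :
    (Measure.pi fun i => (hp i).toPMF.toMeasure).real S = ∑ ys ∈ S, ∏ i, p i (ys i) := by
  rw [← sum_measureReal_singleton]
  refine sum_congr rfl fun ys _ => ?_
  simp only [Measure.real, Measure.pi_singleton, ENNReal.toReal_prod,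
    PMF.toMeasure_apply_singleton _ _ (measurableSet_singleton _), IsProbDist.toPMF,
    PMF.ofFintype_apply, ENNReal.toReal_ofReal ((hp _).1 _)]

end Measure

lemma measureReal_sqrt_lt_abs_sub_integral_le {Ω : Type*} [MeasurableSpace Ω] {μ : Measure Ω}
    [IsProbabilityMeasure μ] {X : Ω → ℝ} (hX : MemLp X 2 μ) {V δ : ℝ} (hV : Var[X; μ] ≤ V)
    (hδ : 0 < δ) : μ.real {ω | δ * √V < |X ω - μ[X]|} ≤ 1 / δ ^ 2 := by
  have hV0 : 0 ≤ V := (variance_nonneg X μ).trans hV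
  rcases hV0.eq_or_lt with rfl | hVpos
  · have h_const : X =ᵐ[μ] fun _ => μ[X] :=
      ae_eq_integral_of_variance_eq_zero hX (hV.antisymm (variance_nonneg X μ))
    have h_null : μ {ω | δ * √0 < |X ω - μ[X]|} = 0 := by
      rw [measure_eq_zero_iff_ae_notMem]
      filter_upwards [h_const] with ω hω
      simp [hω]
    rw [Measure.real, h_null, ENNReal.toReal_zero]
    positivity
  · have hc : 0 < δ * √V := mul_pos hδ (Real.sqrt_pos.2 hVpos)
    calc μ.real {ω | δ * √V < |X ω - μ[X]|}
        ≤ μ.real {ω | δ * √V ≤ |X ω - μ[X]|} :=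
          measureReal_mono (Set.ofPred_subset_ofPred.2 fun _ h => h.le)
      _ ≤ Var[X; μ] / (δ * √V) ^ 2 :=
        ENNReal.toReal_le_of_le_ofReal (div_nonneg (variance_nonneg X μ) (sq_nonneg _))
          (meas_ge_le_variance_div_sq hX hc)
      _ ≤ V / (δ * √V) ^ 2 := by gcongr
      _ = 1 / δ ^ 2 := by
        rw [mul_pow, Real.sq_sqrt hV0]
        field_simp

lemma sum_prod_sqrt_lt_abs_sub_le [Fintype ι] [DecidableEq ι] {p g : ι → Y → ℝ}
    (hp : ∀ i, IsProbDist (p i)) {V δ : ℝ} (hδ : 0 < δ)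
    (hV : ∑ i, (∑ y, p i y * g i y ^ 2 - (∑ y, p i y * g i y) ^ 2) ≤ V) :
    ∑ ys : ι → Y with δ * √V < |∑ i, g i (ys i) - ∑ i, ∑ y, p i y * g i y|, ∏ i, p i (ys i) ≤
      1 / δ ^ 2 := by
  let _ : MeasurableSpace Y := ⊤
  let μ (i : ι) : Measure Y := (hp i).toPMF.toMeasure
  have h_mean : ∫ ys, ∑ i, g i (ys i) ∂Measure.pi μ = ∑ i, ∑ y, p i y * g i y := by
    rw [integral_finsetSum _ fun i _ => .of_finite]
    exact sum_congr rfl fun i _ =>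
      (integral_comp_eval (μ := μ) (f := g i) AEStronglyMeasurable.of_discrete).trans
        ((hp i).integral_toPMF _)
  have h_var : Var[fun ys => ∑ i, g i (ys i); Measure.pi μ] ≤ V := by
    have h := variance_sum_pi (μ := μ) (X := g) fun i => MemLp.of_discrete
    simp only [μ, IsProbDist.variance_toPMF, sum_fn] at h
    exact h.trans_le hV
  have h := measureReal_sqrt_lt_abs_sub_integral_le MemLp.of_discrete h_var hδ
  rw [h_mean] at h
  rw [← measureReal_pi_toPMF hp]
  simpa only [coe_filter, mem_univ, true_and] using h

lemma IsProbDist.prodProb_sqrt_lt_abs_sub_le {n : ℕ} {p g : Y → ℝ} (hp : IsProbDist p) {C θ : ℝ}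
    (hg : ∑ y, p y * g y ^ 2 ≤ C) (hθ : 0 < θ) :
    prodProb p {ys : Fin n → Y | √(C / θ) * √n < |∑ i, g (ys i) - n * ∑ y, p y * g y|} ≤ θ := by
  have hV : ∑ _i : Fin n, (∑ y, p y * g y ^ 2 - (∑ y, p y * g y) ^ 2) ≤ C * n := by
    rw [sum_const, card_univ, Fintype.card_fin, nsmul_eq_mul, mul_comm]
    gcongr
    exact (sub_le_self _ (sq_nonneg _)).trans hg
  have h := sum_prod_sqrt_lt_abs_sub_le (fun _ : Fin n => hp) (g := fun _ => g)
    (Real.sqrt_pos.2 (inv_pos.2 hθ)) hV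
  have h_scale : √θ⁻¹ * √(C * n) = √(C / θ) * √n := by
    rw [← Real.sqrt_mul (inv_nonneg.2 hθ.le), ← Real.sqrt_mul' _ n.cast_nonneg, div_eq_inv_mul,
      mul_assoc]
  simpa only [prodProb, h_scale, sum_const, card_univ, Fintype.card_fin, nsmul_eq_mul,
    Real.sq_sqrt (inv_nonneg.2 hθ.le), one_div, inv_inv] using h

lemma IsProbDist.exists_subset_sum_le {n : ℕ} {p g : Y → ℝ} (hp : IsProbDist p) {C τ : ℝ}
    (hg : ∑ y, p y * g y ^ 2 ≤ C) (hτ : 0 < τ) {A : Finset (Fin n → Y)} (hA : τ ≤ prodProb p A) :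
    ∃ A' ⊆ A, τ / 2 ≤ prodProb p A' ∧
      ∀ ys ∈ A', ∑ i, g (ys i) ≤ n * ∑ y, p y * g y + √(C / (τ / 2)) * √n := by
  let bad (ys : Fin n → Y) : Prop :=
    √(C / (τ / 2)) * √n < |∑ i, g (ys i) - n * ∑ y, p y * g y|
  refine ⟨{ys ∈ A | ¬ bad ys}, filter_subset _ _, ?_, fun ys hys => ?_⟩
  · have h_bad : ∑ ys ∈ A with bad ys, ∏ i, p (ys i) ≤ τ / 2 :=
      (sum_le_sum_of_subset_of_nonneg (filter_subset_filter _ (subset_univ A))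
        fun ys _ _ => prod_nonneg fun i _ => hp.1 (ys i)).trans
        (hp.prodProb_sqrt_lt_abs_sub_le hg (half_pos hτ))
    have h_split := sum_filter_add_sum_filter_not A bad fun ys => ∏ i, p (ys i)
    unfold prodProb at hA ⊢
    linarith
  · have h := le_of_abs_le (not_lt.1 (mem_filter.1 hys).2)
    linarith

end ProductDistribution

open scoped MatrixOrder

section TracePairing

variable {ι : Type*} [Fintype ι]

/-- The real trace form `(A, B) ↦ Re Tr (A B)`. For a density operator `A` it gives the expectation
of the observable `B`, and for `A = 1` the trace of `B`. -/
def tracePairing : Matrix ι ι ℂ →ₗ[ℝ] Matrix ι ι ℂ →ₗ[ℝ] ℝ :=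
  (LinearMap.mul ℝ (Matrix ι ι ℂ)).compr₂ (Complex.reLm ∘ₗ Matrix.traceLinearMap ι ℝ ℂ)

lemma tracePairing_apply (A B : Matrix ι ι ℂ) : tracePairing A B = (A * B).trace.re := rfl

lemma tracePairing_comm (A B : Matrix ι ι ℂ) : tracePairing A B = tracePairing B A := by
  rw [tracePairing_apply, trace_mul_comm, tracePairing_apply]

lemma tracePairing_nonneg {A B : Matrix ι ι ℂ} (hA : 0 ≤ A) (hB : 0 ≤ B) :
    0 ≤ tracePairing A B := by
  obtain ⟨C, rfl⟩ := CStarAlgebra.nonneg_iff_eq_star_mul_self.1 hA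
  rw [tracePairing_apply, mul_assoc, trace_mul_comm]
  have h : (C * B * star C).PosSemidef := nonneg_iff_posSemidef.1 (star_right_conjugate_nonneg hB C)
  exact (Complex.le_def.1 h.trace_nonneg).1

lemma tracePairing_mono {A : Matrix ι ι ℂ} (hA : 0 ≤ A) : Monotone (tracePairing A) :=
  fun B C h => by
    rw [← sub_nonneg, ← map_sub]
    exact tracePairing_nonneg hA (sub_nonneg.2 h)

variable [DecidableEq ι]

lemma tracePairing_one (B : Matrix ι ι ℂ) : tracePairing 1 B = B.trace.re := by
  rw [tracePairing_apply, one_mul]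

lemma IsState.nonneg {ρ : Matrix ι ι ℂ} (h : IsState ρ) : 0 ≤ ρ := nonneg_iff_posSemidef.2 h.1

lemma IsState.tracePairing_one {ρ : Matrix ι ι ℂ} (h : IsState ρ) : tracePairing ρ 1 = 1 := by
  rw [tracePairing_apply, mul_one, h.2, Complex.one_re]

end TracePairing

section CutDown

variable {R : Type*} [Ring R]

/-- The operator `Q` cut down below `1 - B`: for a projection `Q` and `0 ≤ B ≤ 1` it is a
measurement operator that can be added to a measurement whose operators sum to `B`. -/
def cutDown (B Q : R) : R := (1 - B) * Q * (1 - B)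

variable [PartialOrder R] [StarRing R] [StarOrderedRing R] {B Q : R}

lemma mul_self_le_self (hB : 0 ≤ B) (hB1 : B ≤ 1) : B * B ≤ B := by
  have h : B - B * B = B * (1 - B) * B + (1 - B) * B * (1 - B) := by noncomm_ring
  rw [← sub_nonneg, h]
  exact add_nonneg (conjugate_nonneg_of_nonneg (sub_nonneg.2 hB1) hB)
    (conjugate_nonneg_of_nonneg hB (sub_nonneg.2 hB1))

lemma cutDown_nonneg (hB1 : B ≤ 1) (hQ : 0 ≤ Q) : 0 ≤ cutDown B Q :=
  conjugate_nonneg_of_nonneg hQ (sub_nonneg.2 hB1)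

lemma cutDown_le_one_sub (hB : 0 ≤ B) (hB1 : B ≤ 1) (hQ : Q ≤ 1) : cutDown B Q ≤ 1 - B := by
  calc cutDown B Q ≤ (1 - B) * 1 * (1 - B) :=
        conjugate_le_conjugate_of_nonneg hQ (sub_nonneg.2 hB1)
    _ ≤ 1 - B := by
        rw [mul_one]
        exact mul_self_le_self (sub_nonneg.2 hB1) (sub_le_self 1 hB)

lemma apply_cutDown_ge [Algebra ℝ R] [StarModule ℝ R] {φ : R →ₗ[ℝ] ℝ} (hφ : Monotone φ)
    (hφ1 : φ 1 ≤ 1) (hB : 0 ≤ B) (hB1 : B ≤ 1) (hQ : IsStarProjection Q) {c : ℝ} (hc : 0 < c) :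
    φ Q - c - φ B / c ≤ φ (cutDown B Q) := by
  have h_square : 0 ≤ φ ((B - c • Q) * (B - c • Q)) := by
    rw [← map_zero φ]
    exact hφ ((IsSelfAdjoint.of_nonneg hB).sub
      ((IsSelfAdjoint.all c).smul hQ.isSelfAdjoint)).mul_self_nonneg
  have h_square_eq : φ ((B - c • Q) * (B - c • Q)) =
      φ (B * B) - c * φ (B * Q + Q * B) + c ^ 2 * φ Q := by
    have h : (B - c • Q) * (B - c • Q) = B * B - c • (B * Q + Q * B) + c ^ 2 • Q := by
      simp only [sub_mul, mul_sub, smul_mul_assoc, mul_smul_comm, hQ.isIdempotentElem.eq, smul_sub,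
        smul_smul, smul_add, pow_two]
      abel
    rw [h, map_add, map_sub, map_smul, map_smul, smul_eq_mul, smul_eq_mul]
  have h_cross : φ (B * Q + Q * B) ≤ c + φ B / c := by
    have h_div : c + φ B / c = (c ^ 2 + φ B) / c := by field_simp
    rw [h_div, le_div_iff₀ hc]
    have hBB : φ (B * B) ≤ φ B := hφ (mul_self_le_self hB hB1)
    have hQ1 : c ^ 2 * φ Q ≤ c ^ 2 := mul_le_of_le_one_right (sq_nonneg c)
      ((hφ hQ.le_one).trans hφ1)
    linarith
  have h_expand : cutDown B Q = Q - (B * Q + Q * B) + B * Q * B := by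
    rw [cutDown]
    noncomm_ring
  have h_last : 0 ≤ φ (B * Q * B) := by
    rw [← map_zero φ]
    exact hφ (conjugate_nonneg_of_nonneg hQ.nonneg hB)
  rw [h_expand, map_add, map_sub]
  linarith

lemma tracePairing_one_cutDown_le {ι : Type*} [Fintype ι] [DecidableEq ι] {B Q : Matrix ι ι ℂ}
    (hB : 0 ≤ B) (hB1 : B ≤ 1) (hQ : 0 ≤ Q) : tracePairing 1 (cutDown B Q) ≤ tracePairing 1 Q := by
  calc tracePairing 1 (cutDown B Q) = tracePairing Q ((1 - B) * (1 - B)) := by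
        rw [tracePairing_one, cutDown, mul_assoc, trace_mul_comm, mul_assoc, tracePairing_apply]
    _ ≤ tracePairing Q 1 := tracePairing_mono hQ
        ((mul_self_le_self (sub_nonneg.2 hB1) (sub_le_self 1 hB)).trans (sub_le_self 1 hB))
    _ = tracePairing 1 Q := tracePairing_comm Q 1

end CutDown

section TensorPow

variable {d n : ℕ}

lemma tensorPow_mul (A B : Fin n → Mat d) :
    tensorPow A * tensorPow B = tensorPow fun i => A i * B i := by
  ext j k
  simp only [tensorPow, mul_apply, of_apply, ← prod_mul_distrib]
  rw [Fintype.prod_sum]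

lemma tensorPow_trace (A : Fin n → Mat d) : (tensorPow A).trace = ∏ i, (A i).trace := by
  simp only [tensorPow, trace, diag_apply, of_apply]
  rw [Fintype.prod_sum]

lemma tensorPow_one : tensorPow (fun _ : Fin n => (1 : Mat d)) = 1 := by
  ext j k
  simp only [tensorPow, of_apply, one_apply, funext_iff, prod_ite_zero, prod_const_one, mem_univ,
    true_implies]

lemma tensorPow_star (A : Fin n → Mat d) : star (tensorPow A) = tensorPow fun i => star (A i) := by
  ext j k
  simp only [tensorPow, star_apply, of_apply, star_prod]

lemma tensorPow_eq_zero {A : Fin n → Mat d} {i : Fin n} (h : A i = 0) : tensorPow A = 0 := by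
  ext j k
  exact prod_eq_zero (mem_univ i) (congrFun (congrFun h (j i)) (k i))

lemma tensorPow_smul (c : Fin n → ℝ) (A : Fin n → Mat d) :
    (tensorPow fun i => c i • A i) = (∏ i, c i) • tensorPow A := by
  ext j k
  simp only [tensorPow, of_apply, Matrix.smul_apply, Complex.real_smul, prod_mul_distrib,
    Complex.ofReal_prod]

lemma tensorPow_sum {Y : Type*} [Fintype Y] (A : Fin n → Y → Mat d) :
    (tensorPow fun i => ∑ y, A i y) = ∑ ys : Fin n → Y, tensorPow fun i => A i (ys i) := by
  ext j k
  simp only [tensorPow, of_apply, Matrix.sum_apply]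
  rw [Fintype.prod_sum]

lemma tensorPow_isStarProjection {Q : Fin n → Mat d} (hQ : ∀ i, IsStarProjection (Q i)) :
    IsStarProjection (tensorPow Q) := by
  refine isStarProjection_iff'.2 ⟨?_, ?_⟩
  · simp only [tensorPow_mul, (hQ _).isIdempotentElem.eq]
  · simp only [tensorPow_star, (hQ _).isSelfAdjoint.star_eq]

end TensorPow

section SpectralDecomp

variable {ι κ κ' : Type*} [Fintype ι] [DecidableEq ι] [Fintype κ] [Fintype κ']

/-- A spectral decomposition `ρ = ∑ j, R j • π j` of a density operator into mutually orthogonal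
rank-one projections, with an arbitrary index type for the (possibly repeated) eigenvalues. -/
structure IsSpectralDecomp (ρ : Matrix ι ι ℂ) (R : κ → ℝ) (π : κ → Matrix ι ι ℂ) : Prop where
  isStarProjection : ∀ j, IsStarProjection (π j)
  trace_eq_one : ∀ j, (π j).trace = 1
  mul_eq_zero : ∀ j k, j ≠ k → π j * π k = 0
  sum_eq_one : ∑ j, π j = 1
  eq_sum : ρ = ∑ j, R j • π j
  isProbDist : IsProbDist R

lemma IsDiagonalization.isSpectralDecomp {d : ℕ} {ρ : Mat d} {R : Fin d → ℝ} {π : Fin d → Mat d}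
    (h : IsDiagonalization ρ R π) : IsSpectralDecomp ρ R π := by
  obtain ⟨h_pos, h_idem, h_trace, h_orth, h_one, h_sum, h_prob⟩ := h
  refine ⟨fun j => isStarProjection_iff'.2 ⟨h_idem j, (h_pos j).1⟩, h_trace, h_orth, h_one, ?_,
    h_prob⟩
  simpa only [Complex.coe_smul] using h_sum

lemma isSpectralDecomp_diagonal {R : ι → ℝ} (hR : IsProbDist R) :
    IsSpectralDecomp (diagonal fun j => (R j : ℂ)) R fun j => single j j 1 where
  isStarProjection j := isStarProjection_iff'.2
    ⟨by rw [single_mul_single_same, one_mul],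
      by rw [star_eq_conjTranspose, conjTranspose_single, star_one]⟩
  trace_eq_one j := trace_single_eq_same j 1
  mul_eq_zero _ _ hjk := single_mul_single_of_ne _ _ _ _ hjk _
  sum_eq_one := sum_single_one
  eq_sum := by
    simp only [← sum_single_eq_diagonal, smul_single, Complex.real_smul, mul_one]
  isProbDist := hR

namespace IsSpectralDecomp

variable {ρ : Matrix ι ι ℂ} {R : κ → ℝ} {π : κ → Matrix ι ι ℂ}

lemma conjStarAlgAut (h : IsSpectralDecomp ρ R π) (U : unitary (Matrix ι ι ℂ)) :
    IsSpectralDecomp (Unitary.conjStarAlgAut ℂ _ U ρ) R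
      fun j => Unitary.conjStarAlgAut ℂ _ U (π j) where
  isStarProjection j := (h.isStarProjection j).map _
  trace_eq_one j := by
    rw [Unitary.conjStarAlgAut_apply, trace_mul_comm, ← mul_assoc, Unitary.coe_star_mul_self,
      one_mul, h.trace_eq_one]
  mul_eq_zero j k hjk := by rw [← map_mul, h.mul_eq_zero j k hjk, map_zero]
  sum_eq_one := by rw [← map_sum, h.sum_eq_one, map_one]
  eq_sum := by simp only [h.eq_sum, map_sum, ← Complex.coe_smul, map_smul]
  isProbDist := h.isProbDist

lemma proj_mul (h : IsSpectralDecomp ρ R π) (j k : κ) :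
    π j * π k = if j = k then π j else 0 := by
  split_ifs with hjk
  · rw [← hjk, (h.isStarProjection j).isIdempotentElem.eq]
  · exact h.mul_eq_zero j k hjk

lemma proj_mul_state (h : IsSpectralDecomp ρ R π) (j : κ) : π j * ρ = R j • π j := by
  simp only [h.eq_sum, mul_sum, mul_smul_comm, h.proj_mul, smul_ite, smul_zero, sum_ite_eq,
    mem_univ, if_true]

lemma state_mul_proj (h : IsSpectralDecomp ρ R π) (j : κ) : ρ * π j = R j • π j := by
  simp only [h.eq_sum, sum_mul, smul_mul_assoc, h.proj_mul, smul_ite, smul_zero, sum_ite_eq',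
    mem_univ, if_true]

lemma isState (h : IsSpectralDecomp ρ R π) : IsState ρ := by
  refine ⟨?_, ?_⟩
  · rw [← nonneg_iff_posSemidef, h.eq_sum]
    exact sum_nonneg fun j _ => smul_nonneg (h.isProbDist.1 j) (h.isStarProjection j).nonneg
  · simp only [h.eq_sum, trace_sum, trace_smul, h.trace_eq_one, Complex.real_smul, mul_one]
    rw [← Complex.ofReal_sum, h.isProbDist.2, Complex.ofReal_one]

lemma isStarProjection_sum (h : IsSpectralDecomp ρ R π) (S : Finset κ) :
    IsStarProjection (∑ j ∈ S, π j) := by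
  refine isStarProjection_iff'.2 ⟨?_, ?_⟩
  · simp only [sum_mul_sum, h.proj_mul, sum_ite_eq]
    exact sum_congr rfl fun j hj => if_pos hj
  · simp only [star_sum, (h.isStarProjection _).isSelfAdjoint.star_eq]

lemma tracePairing_one_proj (h : IsSpectralDecomp ρ R π) (j : κ) : tracePairing 1 (π j) = 1 := by
  rw [tracePairing_one, h.trace_eq_one, Complex.one_re]

lemma tracePairing_one_sum (h : IsSpectralDecomp ρ R π) (S : Finset κ) :
    tracePairing 1 (∑ j ∈ S, π j) = #S := by
  simp only [map_sum, h.tracePairing_one_proj, sum_const, nsmul_eq_mul, mul_one]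

lemma tracePairing_sum (h : IsSpectralDecomp ρ R π) (S : Finset κ) :
    tracePairing ρ (∑ j ∈ S, π j) = ∑ j ∈ S, R j := by
  rw [map_sum]
  refine sum_congr rfl fun j _ => ?_
  rw [tracePairing_apply, h.state_mul_proj, ← one_mul (R j • π j), ← tracePairing_apply, map_smul,
    h.tracePairing_one_proj, smul_eq_mul, mul_one]

-- The weights `Tr (π j * π' k)` are doubly stochastic and vanish unless `R j = R' k`.
lemma sum_comp_eigenvalues_eq {R' : κ' → ℝ} {π' : κ' → Matrix ι ι ℂ} (h : IsSpectralDecomp ρ R π)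
    (h' : IsSpectralDecomp ρ R' π') (f : ℝ → ℝ) : ∑ j, f (R j) = ∑ k, f (R' k) := by
  have h_weight (j : κ) (k : κ') :
      f (R j) * tracePairing (π j) (π' k) = f (R' k) * tracePairing (π j) (π' k) := by
    have h_swap : R j * tracePairing (π j) (π' k) = R' k * tracePairing (π j) (π' k) := by
      calc R j * tracePairing (π j) (π' k) = tracePairing (π j * ρ) (π' k) := by
            rw [h.proj_mul_state, map_smul, LinearMap.smul_apply, smul_eq_mul]
        _ = tracePairing (π j) (ρ * π' k) := by
            rw [tracePairing_apply, tracePairing_apply, mul_assoc]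
        _ = R' k * tracePairing (π j) (π' k) := by
            rw [h'.state_mul_proj, map_smul, smul_eq_mul]
    rcases eq_or_ne (tracePairing (π j) (π' k)) 0 with h0 | h0
    · simp only [h0, mul_zero]
    · rw [mul_right_cancel₀ h0 h_swap]
  have h_row (j : κ) : ∑ k, tracePairing (π j) (π' k) = 1 := by
    rw [← map_sum, h'.sum_eq_one, tracePairing_comm, h.tracePairing_one_proj]
  have h_col (k : κ') : ∑ j, tracePairing (π j) (π' k) = 1 := by
    simp only [tracePairing_comm _ (π' k)]
    rw [← map_sum, h.sum_eq_one, tracePairing_comm, h'.tracePairing_one_proj]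
  calc ∑ j, f (R j) = ∑ j, ∑ k, f (R j) * tracePairing (π j) (π' k) := by
        simp only [← mul_sum, h_row, mul_one]
    _ = ∑ k, ∑ j, f (R' k) * tracePairing (π j) (π' k) := by
        simp only [h_weight]
        exact sum_comm
    _ = ∑ k, f (R' k) := by simp only [← mul_sum, h_col, mul_one]

lemma tracePairing_le (h : IsSpectralDecomp ρ R π) {B : Matrix ι ι ℂ} (hB : 0 ≤ B) (hB1 : B ≤ 1)
    {S : Finset κ} {c : ℝ} (hc : 0 ≤ c) (hS : ∀ j ∉ S, R j ≤ c) :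
    tracePairing ρ B ≤ ∑ j ∈ S, R j + c * tracePairing 1 B := by
  have h_nonneg (j : κ) : 0 ≤ tracePairing (π j) B :=
    tracePairing_nonneg (h.isStarProjection j).nonneg hB
  have h_le_one (j : κ) : tracePairing (π j) B ≤ 1 := by
    rw [← h.tracePairing_one_proj j, tracePairing_comm 1]
    exact tracePairing_mono (h.isStarProjection j).nonneg hB1
  have h_total : ∑ j, tracePairing (π j) B = tracePairing 1 B := by
    simp only [tracePairing_comm _ B]
    rw [← map_sum, h.sum_eq_one]
  calc tracePairing ρ B = ∑ j, R j * tracePairing (π j) B := by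
        simp only [h.eq_sum, map_sum, map_smul, LinearMap.sum_apply, LinearMap.smul_apply,
          smul_eq_mul]
    _ = ∑ j ∈ S, R j * tracePairing (π j) B + ∑ j ∈ Sᶜ, R j * tracePairing (π j) B :=
        (sum_add_sum_compl S _).symm
    _ ≤ ∑ j ∈ S, R j + ∑ j ∈ Sᶜ, c * tracePairing (π j) B := by
        gcongr with j _ j hj
        · exact mul_le_of_le_one_right (h.isProbDist.1 j) (h_le_one j)
        · exact h_nonneg j
        · exact hS j (mem_compl.1 hj)
    _ ≤ ∑ j ∈ S, R j + c * tracePairing 1 B := by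
        rw [← mul_sum, ← h_total]
        exact add_le_add_right
          (mul_le_mul_of_nonneg_left (sum_le_univ_sum_of_nonneg h_nonneg) hc) _

protected lemma tensorPow {d n : ℕ} {A : Fin n → Mat d} {R : Fin n → κ → ℝ}
    {π : Fin n → κ → Mat d} (h : ∀ i, IsSpectralDecomp (A i) (R i) (π i)) :
    IsSpectralDecomp (tensorPow A) (fun js : Fin n → κ => ∏ i, R i (js i))
      fun js => tensorPow fun i => π i (js i) where
  isStarProjection js := tensorPow_isStarProjection fun i => (h i).isStarProjection (js i)
  trace_eq_one js := by
    rw [tensorPow_trace]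
    exact prod_eq_one fun i _ => (h i).trace_eq_one (js i)
  mul_eq_zero js ks hjk := by
    obtain ⟨i, hi⟩ := Function.ne_iff.1 hjk
    rw [tensorPow_mul]
    exact tensorPow_eq_zero ((h i).mul_eq_zero _ _ hi)
  sum_eq_one := by simp only [← tensorPow_sum, (h _).sum_eq_one, tensorPow_one]
  eq_sum := by
    have hA : A = fun i => ∑ j, R i j • π i j := funext fun i => (h i).eq_sum
    simp only [hA, tensorPow_sum, tensorPow_smul]
  isProbDist := .pi fun i => (h i).isProbDist

end IsSpectralDecomp

lemma IsState.exists_isSpectralDecomp {ρ : Matrix ι ι ℂ} (h : IsState ρ) :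
    ∃ π, IsSpectralDecomp ρ h.1.1.eigenvalues π := by
  have h_prob : IsProbDist h.1.1.eigenvalues := by
    refine ⟨h.1.eigenvalues_nonneg, Complex.ofReal_injective ?_⟩
    rw [Complex.ofReal_sum, Complex.ofReal_one]
    exact h.1.1.trace_eq_sum_eigenvalues.symm.trans h.2
  have h_conj := (isSpectralDecomp_diagonal h_prob).conjStarAlgAut h.1.1.eigenvectorUnitary
  exact ⟨_, h.1.1.spectral_theorem.symm ▸ h_conj⟩

lemma IsSpectralDecomp.vnEntropy_eq {d : ℕ} {ρ : Mat d} {R : κ → ℝ} {π : κ → Mat d}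
    (h : IsSpectralDecomp ρ R π) : vnEntropy ρ = shannonEntropy R := by
  obtain ⟨π', h'⟩ := h.isState.exists_isSpectralDecomp
  rw [vnEntropy, dif_pos h.isState.1.1, shannonEntropy,
    h'.sum_comp_eigenvalues_eq h fun t => t * Real.logb 2 t]

end SpectralDecomp

section Entropy

lemma negMulLog_le_inv_exp_one {t : ℝ} (ht : 0 ≤ t) : Real.negMulLog t ≤ (Real.exp 1)⁻¹ := by
  have he := Real.exp_pos 1
  have h := Real.negMulLog_le_one_sub_self (mul_nonneg he.le ht)
  have h_scale : Real.negMulLog (Real.exp 1) = -Real.exp 1 := by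
    rw [Real.negMulLog, Real.log_exp, mul_one]
  rw [Real.negMulLog_mul, h_scale] at h
  rw [inv_eq_one_div, le_div_iff₀' he]
  linarith

lemma sqrt_mul_abs_logb_le_Kconst {t : ℝ} (h0 : 0 ≤ t) (h1 : t ≤ 1) :
    √t * |Real.logb 2 t| ≤ Kconst := by
  have h_log : Real.log t = 2 * Real.log (√t) := by
    rw [Real.log_sqrt h0]
    ring
  calc √t * |Real.logb 2 t| = 2 * Real.negMulLog (√t) / Real.log 2 := by
        rw [abs_of_nonpos (Real.logb_nonpos one_lt_two h0 h1), Real.logb, h_log, Real.negMulLog]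
        ring
    _ ≤ 2 * (Real.exp 1)⁻¹ / Real.log 2 := by
        gcongr
        exact negMulLog_le_inv_exp_one (Real.sqrt_nonneg t)
    _ = Kconst := by
        rw [Kconst, Real.logb, Real.log_exp]
        ring

lemma mul_logb_sq_le_Kconst_sq {t : ℝ} (h0 : 0 ≤ t) (h1 : t ≤ 1) :
    t * Real.logb 2 t ^ 2 ≤ Kconst ^ 2 := by
  calc t * Real.logb 2 t ^ 2 = (√t * |Real.logb 2 t|) ^ 2 := by
        rw [mul_pow, Real.sq_sqrt h0, sq_abs]
    _ ≤ Kconst ^ 2 := by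
        gcongr
        exact sqrt_mul_abs_logb_le_Kconst h0 h1

lemma abs_mul_logb_le_Kconst {t : ℝ} (h0 : 0 ≤ t) (h1 : t ≤ 1) :
    |t * Real.logb 2 t| ≤ Kconst := by
  have h_sqrt : t ≤ √t := Real.le_sqrt_of_sq_le (by nlinarith)
  calc |t * Real.logb 2 t| = t * |Real.logb 2 t| := by rw [abs_mul, abs_of_nonneg h0]
    _ ≤ √t * |Real.logb 2 t| := by gcongr
    _ ≤ Kconst := sqrt_mul_abs_logb_le_Kconst h0 h1

variable {κ : Type*} [Fintype κ] {p : κ → ℝ}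

lemma IsProbDist.abs_shannonEntropy_le (hp : IsProbDist p) :
    |shannonEntropy p| ≤ Fintype.card κ * Kconst := by
  calc |shannonEntropy p| ≤ ∑ j, |p j * Real.logb 2 (p j)| := by
        rw [shannonEntropy, abs_neg]
        exact abs_sum_le_sum_abs _ _
    _ ≤ ∑ _j : κ, Kconst := sum_le_sum fun j _ => abs_mul_logb_le_Kconst (hp.1 j) (hp.le_one j)
    _ = Fintype.card κ * Kconst := by rw [sum_const, card_univ, nsmul_eq_mul]

lemma IsProbDist.sum_mul_logb_sq_le (hp : IsProbDist p) :
    ∑ j, p j * Real.logb 2 (p j) ^ 2 ≤ Fintype.card κ * Kconst ^ 2 := by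
  calc ∑ j, p j * Real.logb 2 (p j) ^ 2 ≤ ∑ _j : κ, Kconst ^ 2 :=
        sum_le_sum fun j _ => mul_logb_sq_le_Kconst_sq (hp.1 j) (hp.le_one j)
    _ = Fintype.card κ * Kconst ^ 2 := by rw [sum_const, card_univ, nsmul_eq_mul]

lemma prod_eq_two_rpow_sum_logb {ι : Type*} [Fintype ι] {r : ι → ℝ} (hr : ∀ i, 0 < r i) :
    ∏ i, r i = (2 : ℝ) ^ ∑ i, Real.logb 2 (r i) := by
  rw [Real.rpow_sum_of_pos two_pos]
  exact prod_congr rfl fun i _ => (Real.rpow_logb two_pos (by norm_num) (hr i)).symm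

lemma prod_le_two_rpow {ι : Type*} [Fintype ι] {r : ι → ℝ} (hr : ∀ i, 0 ≤ r i) {t : ℝ}
    (h : ∑ i, Real.logb 2 (r i) ≤ t) : ∏ i, r i ≤ (2 : ℝ) ^ t := by
  by_cases h_pos : ∀ i, 0 < r i
  · rw [prod_eq_two_rpow_sum_logb h_pos]
    exact Real.rpow_le_rpow_of_exponent_le one_le_two h
  · push Not at h_pos
    obtain ⟨i, hi⟩ := h_pos
    rw [prod_eq_zero (mem_univ i) (hi.antisymm (hr i))]
    positivity

lemma IsShadow.le_trace {d n : ℕ} {ρ : Mat d} {R : κ → ℝ} {π : κ → Mat d} {B : MatPow d n} {θ : ℝ}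
    (hB : IsShadow (tensorPow fun _ => ρ) B θ) (h : IsSpectralDecomp ρ R π) (hθ : 0 < θ) :
    θ / 2 * (2 : ℝ) ^ (n * shannonEntropy R - √(Fintype.card κ * Kconst ^ 2 / (θ / 2)) * √n) ≤
      B.trace.re := by
  have h_prob := h.isProbDist
  have h_tail := h_prob.prodProb_sqrt_lt_abs_sub_le (n := n) (g := fun j => Real.logb 2 (R j))
    h_prob.sum_mul_logb_sq_le (half_pos hθ)
  set E : ℝ := √(Fintype.card κ * Kconst ^ 2 / (θ / 2)) * √n
  set atypical : Finset (Fin n → κ) :=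
    {js | E < |∑ i, Real.logb 2 (R (js i)) - n * ∑ j, R j * Real.logb 2 (R j)|}
  have h_typical : ∀ js ∉ atypical, ∏ i, R (js i) ≤ (2 : ℝ) ^ (-(n * shannonEntropy R - E)) := by
    intro js hjs
    have h_abs : |∑ i, Real.logb 2 (R (js i)) - n * ∑ j, R j * Real.logb 2 (R j)| ≤ E :=
      not_lt.1 fun hlt => hjs (mem_filter.2 ⟨mem_univ _, hlt⟩)
    refine prod_le_two_rpow (fun i => h_prob.1 (js i)) ?_
    rw [shannonEntropy]
    linarith [le_of_abs_le h_abs]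
  have h_pairing := (IsSpectralDecomp.tensorPow fun _ => h).tracePairing_le
    (nonneg_iff_posSemidef.2 hB.1) (le_iff.2 hB.2.1) (by positivity) h_typical
  have h_shadow : θ ≤ tracePairing (tensorPow fun _ => ρ) B := hB.2.2
  rw [tracePairing_one, Real.rpow_neg two_pos.le, inv_mul_eq_div] at h_pairing
  rw [prodProb] at h_tail
  rw [← le_div_iff₀ (by positivity)]
  linarith

end Entropy

section CondTypical

variable {X : Type*} {n d : ℕ} {xs : Fin n → X} {js : Fin n → Fin d} {q : X → Fin d → ℝ} {δ : ℝ}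

lemma countIn_le (x : X) (xs : Fin n → X) : countIn x xs ≤ n :=
  (card_filter_le _ _).trans_eq (card_fin n)

lemma countIn_apply_pos (xs : Fin n → X) (i : Fin n) : 0 < countIn (xs i) xs :=
  card_pos.2 ⟨i, mem_filter.2 ⟨mem_univ i, rfl⟩⟩

lemma sum_ite_eq_countIn_mul [DecidableEq X] (x : X) (xs : Fin n → X) (c : ℝ) :
    ∑ i, (if xs i = x then c else 0) = countIn x xs * c := by
  rw [← sum_filter, sum_const, nsmul_eq_mul, countIn]
  congr

lemma sum_comp_eq_sum_countIn_mul [Fintype X] (xs : Fin n → X) (g : X → ℝ) :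
    ∑ i, g (xs i) = ∑ x, countIn x xs * g x := by
  simp only [← sum_ite_eq_countIn_mul]
  rw [sum_comm]
  simp only [sum_ite_eq, mem_univ, if_true]

lemma mem_condTypicalSet [Fintype X] :
    js ∈ condTypicalSet xs q δ ↔ ∀ (x : X) (k : Fin d),
      |countIn (x, k) (fun i => (xs i, js i)) - countIn x xs * q x k| ≤
        δ * √(countIn x xs) * √(q x k * (1 - q x k)) := by
  refine mem_filter.trans ?_
  simp only [mem_univ, true_and, countIn, Prod.mk.injEq]

lemma pos_of_mem_condTypicalSet [Fintype X] (hq : ∀ x k, 0 ≤ q x k)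
    (hjs : js ∈ condTypicalSet xs q δ) (i : Fin n) : 0 < q (xs i) (js i) := by
  refine (hq _ _).lt_of_ne fun h0 => ?_
  have h := mem_condTypicalSet.1 hjs (xs i) (js i)
  rw [← h0, mul_zero, sub_zero, zero_mul, Real.sqrt_zero, mul_zero, abs_nonpos_iff,
    Nat.cast_eq_zero] at h
  exact (countIn_apply_pos (fun i => (xs i, js i)) i).ne' h

lemma abs_countIn_sub_mul_abs_logb_le [Fintype X] (hq : ∀ x, IsProbDist (q x)) (hδ : 0 ≤ δ)
    (hjs : js ∈ condTypicalSet xs q δ) (x : X) (k : Fin d) :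
    |countIn (x, k) (fun i => (xs i, js i)) - countIn x xs * q x k| * |Real.logb 2 (q x k)| ≤
      δ * Kconst * √n := by
  have h_q0 := (hq x).1 k
  have h_count : (countIn x xs : ℝ) ≤ n := by exact_mod_cast countIn_le x xs
  have h_var : q x k * (1 - q x k) ≤ q x k := mul_le_of_le_one_right h_q0 (sub_le_self 1 h_q0)
  calc |countIn (x, k) (fun i => (xs i, js i)) - countIn x xs * q x k| * |Real.logb 2 (q x k)|
      ≤ δ * √(countIn x xs) * √(q x k * (1 - q x k)) * |Real.logb 2 (q x k)| := by
        gcongr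
        exact mem_condTypicalSet.1 hjs x k
    _ ≤ δ * √n * √(q x k) * |Real.logb 2 (q x k)| := by gcongr
    _ = δ * √n * (√(q x k) * |Real.logb 2 (q x k)|) := by ring
    _ ≤ δ * √n * Kconst := by
        gcongr
        exact sqrt_mul_abs_logb_le_Kconst h_q0 ((hq x).le_one k)
    _ = δ * Kconst * √n := by ring

lemma two_rpow_le_prod_of_mem_condTypicalSet [Fintype X] (hq : ∀ x, IsProbDist (q x))
    (hδ : 0 ≤ δ) (hjs : js ∈ condTypicalSet xs q δ) :
    (2 : ℝ) ^ (-(∑ i, shannonEntropy (q (xs i)) + δ * Kconst * (Fintype.card X * d) * √n)) ≤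
      ∏ i, q (xs i) (js i) := by
  rw [prod_eq_two_rpow_sum_logb (pos_of_mem_condTypicalSet (fun x => (hq x).1) hjs)]
  refine Real.rpow_le_rpow_of_exponent_le one_le_two ?_
  have h_term (x : X) (k : Fin d) :
      countIn x xs * (q x k * Real.logb 2 (q x k)) - δ * Kconst * √n ≤
        countIn (x, k) (fun i => (xs i, js i)) * Real.logb 2 (q x k) := by
    have h := abs_countIn_sub_mul_abs_logb_le hq hδ hjs x k
    rw [← abs_mul] at h
    linarith [neg_le_of_abs_le h]
  calc -(∑ i, shannonEntropy (q (xs i)) + δ * Kconst * (Fintype.card X * d) * √n)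
      = ∑ x, ∑ k, (countIn x xs * (q x k * Real.logb 2 (q x k)) - δ * Kconst * √n) := by
        rw [sum_comp_eq_sum_countIn_mul xs fun x => shannonEntropy (q x)]
        simp only [shannonEntropy, sum_sub_distrib, ← mul_sum, sum_const, card_univ,
          Fintype.card_fin, nsmul_eq_mul, mul_neg, sum_neg_distrib]
        ring
    _ ≤ ∑ x, ∑ k, countIn (x, k) (fun i => (xs i, js i)) * Real.logb 2 (q x k) :=
        sum_le_sum fun x _ => sum_le_sum fun k _ => h_term x k
    _ = ∑ i, Real.logb 2 (q (xs i) (js i)) := by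
        rw [← Fintype.sum_prod_type']
        exact (sum_comp_eq_sum_countIn_mul _ fun xk : X × Fin d => Real.logb 2 (q xk.1 xk.2)).symm

lemma card_condTypicalSet_le [Fintype X] (hq : ∀ x, IsProbDist (q x)) (hδ : 0 ≤ δ) :
    (#(condTypicalSet xs q δ) : ℝ) ≤
      (2 : ℝ) ^ (∑ i, shannonEntropy (q (xs i)) + δ * Kconst * (Fintype.card X * d) * √n) := by
  have h_prob := IsProbDist.pi fun i => hq (xs i)
  have h_mass := (card_nsmul_le_sum _ _ _ fun js hjs =>
    two_rpow_le_prod_of_mem_condTypicalSet hq hδ hjs).trans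
      (sum_le_univ_sum_of_nonneg h_prob.1 |>.trans_eq h_prob.2)
  rwa [nsmul_eq_mul, Real.rpow_neg two_pos.le, ← div_eq_mul_inv, div_le_one (by positivity)]
    at h_mass

lemma sum_prod_lt_abs_countIn_sub_le (hq : ∀ x, IsProbDist (q x)) (hδ : 0 < δ) (xs : Fin n → X)
    (x : X) (k : Fin d) :
    ∑ js : Fin n → Fin d with δ * √(countIn x xs) * √(q x k * (1 - q x k)) <
      |countIn (x, k) (fun i => (xs i, js i)) - countIn x xs * q x k|, ∏ i, q (xs i) (js i) ≤
      1 / δ ^ 2 := by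
  let hit (i : Fin n) (j : Fin d) : ℝ := if (xs i, j) = (x, k) then 1 else 0
  have h_hit (i : Fin n) : ∑ j, q (xs i) j * hit i j = if xs i = x then q x k else 0 := by
    by_cases hx : xs i = x <;> simp [hit, hx]
  have h_sq (i : Fin n) (j : Fin d) : hit i j ^ 2 = hit i j := by
    simp only [hit, ite_pow, one_pow, zero_pow two_ne_zero]
  have h_count (js : Fin n → Fin d) :
      ∑ i, hit i (js i) = countIn (x, k) fun i => (xs i, js i) :=
    (sum_ite_eq_countIn_mul _ _ 1).trans (mul_one _)
  have h_mean : ∑ i, ∑ j, q (xs i) j * hit i j = countIn x xs * q x k := by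
    simp only [h_hit, sum_ite_eq_countIn_mul]
  have h_var : ∑ i, (∑ j, q (xs i) j * hit i j ^ 2 - (∑ j, q (xs i) j * hit i j) ^ 2) ≤
      countIn x xs * (q x k * (1 - q x k)) := by
    rw [← sum_ite_eq_countIn_mul]
    refine sum_le_sum fun i _ => le_of_eq ?_
    simp only [h_sq, h_hit]
    split_ifs <;> ring
  have h := sum_prod_sqrt_lt_abs_sub_le (fun i => hq (xs i)) hδ h_var
  have h_sqrt : δ * √(countIn x xs * (q x k * (1 - q x k))) =
      δ * √(countIn x xs) * √(q x k * (1 - q x k)) := by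
    rw [Real.sqrt_mul (Nat.cast_nonneg _), mul_assoc]
  simpa only [h_count, h_mean, h_sqrt] using h

lemma one_sub_le_sum_condTypicalSet [Fintype X] (hq : ∀ x, IsProbDist (q x)) (hδ : 0 < δ)
    (xs : Fin n → X) : 1 - Fintype.card X * d * (1 / δ ^ 2) ≤
      ∑ js ∈ condTypicalSet xs q δ, ∏ i, q (xs i) (js i) := by
  let deviates (xk : X × Fin d) (js : Fin n → Fin d) : Prop :=
    δ * √(countIn xk.1 xs) * √(q xk.1 xk.2 * (1 - q xk.1 xk.2)) <
      |countIn xk (fun i => (xs i, js i)) - countIn xk.1 xs * q xk.1 xk.2|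
  have h_prob := IsProbDist.pi fun i => hq (xs i)
  refine h_prob.one_sub_le_sum (T := {js | ∃ xk, deviates xk js}) (fun js hjs => ?_) ?_
  · simp only [mem_condTypicalSet, not_forall, not_le] at hjs
    obtain ⟨x, k, h⟩ := hjs
    exact mem_filter.2 ⟨mem_univ _, (x, k), h⟩
  · calc ∑ js with ∃ xk, deviates xk js, ∏ i, q (xs i) (js i)
        ≤ ∑ xk, ∑ js with deviates xk js, ∏ i, q (xs i) (js i) :=
          sum_filter_exists_le h_prob.1 deviates
      _ ≤ ∑ _xk : X × Fin d, 1 / δ ^ 2 :=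
          sum_le_sum fun xk _ => sum_prod_lt_abs_countIn_sub_le hq hδ xs xk.1 xk.2
      _ = Fintype.card X * d * (1 / δ ^ 2) := by
          rw [sum_const, card_univ, Fintype.card_prod, Fintype.card_fin, nsmul_eq_mul,
            Nat.cast_mul]

variable [Fintype X] {W : X → Mat d} {π : X → Fin d → Mat d}

lemma isStarProjection_condTypicalProj (hW : ∀ x, IsSpectralDecomp (W x) (q x) (π x))
    (xs : Fin n → X) (δ : ℝ) : IsStarProjection (condTypicalProj xs q π δ) :=
  (IsSpectralDecomp.tensorPow fun i => hW (xs i)).isStarProjection_sum _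

lemma tracePairing_one_condTypicalProj_le (hW : ∀ x, IsSpectralDecomp (W x) (q x) (π x))
    (hδ : 0 ≤ δ) (xs : Fin n → X) : tracePairing 1 (condTypicalProj xs q π δ) ≤
      (2 : ℝ) ^ (∑ i, shannonEntropy (q (xs i)) + δ * Kconst * (Fintype.card X * d) * √n) :=
  ((IsSpectralDecomp.tensorPow fun i => hW (xs i)).tracePairing_one_sum _).trans_le
    (card_condTypicalSet_le (fun x => (hW x).isProbDist) hδ)

lemma one_sub_le_tracePairing_condTypicalProj (hW : ∀ x, IsSpectralDecomp (W x) (q x) (π x))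
    (hδ : 0 < δ) (xs : Fin n → X) : 1 - Fintype.card X * d * (1 / δ ^ 2) ≤
      tracePairing (tensorPow fun i => W (xs i)) (condTypicalProj xs q π δ) :=
  (one_sub_le_sum_condTypicalSet (fun x => (hW x).isProbDist) hδ xs).trans_eq
    ((IsSpectralDecomp.tensorPow fun i => hW (xs i)).tracePairing_sum _).symm

end CondTypical

section Subcode

variable {α ι : Type*} [Fintype ι] [DecidableEq ι] {σ Q : α → Matrix ι ι ℂ} {A A' : Set α}
  {lam : ℝ} {k : ℕ} {f : Fin k → α} {D : Fin k → Matrix ι ι ℂ}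

/-- A code of size `k` for the channel `x ↦ σ x` with codewords in `A` and error probability at most
`lam`, whose decoding operators sum only to at most `1` and obey the trace bound
`Tr (D m) ≤ Tr (Q (f m))`. The greedy construction extends such codes one codeword at a time. -/
structure IsSubcode (σ Q : α → Matrix ι ι ℂ) (A : Set α) (lam : ℝ) (f : Fin k → α)
    (D : Fin k → Matrix ι ι ℂ) : Prop where
  nonneg : ∀ m, 0 ≤ D m
  sum_le_one : ∑ m, D m ≤ 1
  mem : ∀ m, f m ∈ A
  trace_le : ∀ m, tracePairing 1 (D m) ≤ tracePairing 1 (Q (f m))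
  success : ∀ m, 1 - lam ≤ tracePairing (σ (f m)) (D m)

namespace IsSubcode

lemma mono (h : IsSubcode σ Q A lam f D) (hA : A ⊆ A') : IsSubcode σ Q A' lam f D where
  __ := h
  mem m := hA (h.mem m)

lemma sum_nonneg (h : IsSubcode σ Q A lam f D) : 0 ≤ ∑ m, D m :=
  Finset.sum_nonneg fun m _ => h.nonneg m

lemma tracePairing_one_sum_le (h : IsSubcode σ Q A lam f D) {L : ℝ}
    (hL : ∀ x ∈ A, tracePairing 1 (Q x) ≤ L) : tracePairing 1 (∑ m, D m) ≤ k * L := by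
  calc tracePairing 1 (∑ m, D m) = ∑ m, tracePairing 1 (D m) := map_sum _ _ _
    _ ≤ ∑ _m : Fin k, L := sum_le_sum fun m _ => (h.trace_le m).trans (hL _ (h.mem m))
    _ = k * L := by rw [sum_const, card_univ, Fintype.card_fin, nsmul_eq_mul]

lemma cons_cutDown (h : IsSubcode σ Q A lam f D) (hlam : 0 < lam) {x : α} (hx : x ∈ A)
    (hσ : IsState (σ x)) (hQ : IsStarProjection (Q x))
    (hσQ : 1 - lam / 3 ≤ tracePairing (σ x) (Q x))
    (hσD : tracePairing (σ x) (∑ m, D m) ≤ lam ^ 2 / 9) :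
    IsSubcode σ Q A lam (vecCons x f) (vecCons (cutDown (∑ m, D m) (Q x)) D) where
  nonneg := Fin.forall_fin_succ.2 ⟨cutDown_nonneg h.sum_le_one hQ.nonneg, h.nonneg⟩
  sum_le_one := by
    simp only [Fin.sum_univ_succ, cons_val_zero, cons_val_succ]
    exact le_sub_iff_add_le.1 (cutDown_le_one_sub h.sum_nonneg h.sum_le_one hQ.le_one)
  mem := Fin.forall_fin_succ.2 ⟨hx, h.mem⟩
  trace_le := Fin.forall_fin_succ.2
    ⟨tracePairing_one_cutDown_le h.sum_nonneg h.sum_le_one hQ.nonneg, h.trace_le⟩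
  success := by
    refine Fin.forall_fin_succ.2 ⟨?_, h.success⟩
    have h_cut := apply_cutDown_ge (tracePairing_mono hσ.nonneg) hσ.tracePairing_one.le
      h.sum_nonneg h.sum_le_one hQ (by positivity : 0 < lam / 3)
    have h_div : tracePairing (σ x) (∑ m, D m) / (lam / 3) ≤ lam / 3 := by
      rw [div_le_iff₀ (by positivity)]
      linarith
    simp only [cons_val_zero]
    linarith

end IsSubcode

lemma exists_isSubcode_eq_or_forall_le (hlam : 0 < lam) (hσ : ∀ x, IsState (σ x))
    (hQ : ∀ x, IsStarProjection (Q x)) (hσQ : ∀ x, 1 - lam / 3 ≤ tracePairing (σ x) (Q x))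
    (A : Set α) (N : ℕ) :
    ∃ (k : ℕ) (f : Fin k → α) (D : Fin k → Matrix ι ι ℂ), IsSubcode σ Q A lam f D ∧
      (k = N ∨ ∀ x ∈ A, lam ^ 2 / 9 ≤ tracePairing (σ x) (∑ m, D m)) := by
  induction N with
  | zero =>
    exact ⟨0, Fin.elim0, Fin.elim0, ⟨fun m => m.elim0, zero_le_one, fun m => m.elim0,
      fun m => m.elim0, fun m => m.elim0⟩, .inl rfl⟩
  | succ N ih =>
    obtain ⟨k, f, D, h, rfl | h_shadow⟩ := ih
    · by_cases h_shadow : ∀ x ∈ A, lam ^ 2 / 9 ≤ tracePairing (σ x) (∑ m, D m)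
      · exact ⟨k, f, D, h, .inr h_shadow⟩
      · push Not at h_shadow
        obtain ⟨x, hx, h_small⟩ := h_shadow
        exact ⟨k + 1, _, _, h.cons_cutDown hlam hx (hσ x) (hQ x) (hσQ x) h_small.le, .inl rfl⟩
    · exact ⟨k, f, D, h, .inr h_shadow⟩

lemma exists_isSubcode_le (hlam : 0 < lam) (hσ : ∀ x, IsState (σ x))
    (hQ : ∀ x, IsStarProjection (Q x)) (hσQ : ∀ x, 1 - lam / 3 ≤ tracePairing (σ x) (Q x))
    {L T : ℝ} (hL : 0 < L) (hQL : ∀ x ∈ A, tracePairing 1 (Q x) ≤ L)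
    (hT : ∀ B : Matrix ι ι ℂ, 0 ≤ B → B ≤ 1 → (∀ x ∈ A, lam ^ 2 / 9 ≤ tracePairing (σ x) B) →
      T * L ≤ tracePairing 1 B) :
    ∃ (k : ℕ) (f : Fin k → α) (D : Fin k → Matrix ι ι ℂ),
      IsSubcode σ Q A lam f D ∧ T ≤ k := by
  obtain ⟨k, f, D, h, rfl | h_shadow⟩ := exists_isSubcode_eq_or_forall_le hlam hσ hQ hσQ A ⌈T⌉₊
  · exact ⟨_, f, D, h, Nat.le_ceil T⟩
  · refine ⟨k, f, D, h, le_of_mul_le_mul_right ?_ hL⟩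
    exact (hT _ h.sum_nonneg h.sum_le_one h_shadow).trans (h.tracePairing_one_sum_le hQL)

lemma IsSubcode.exists_isCode {X : Type*} [Fintype X] {d n : ℕ} {W : X → Mat d}
    {Q : (Fin n → X) → MatPow d n} {A : Set (Fin n → X)} {f : Fin k → Fin n → X}
    {D : Fin k → MatPow d n} (h : IsSubcode (fun xs => tensorPow fun i => W (xs i)) Q A lam f D)
    (xs₀ : Fin n → X) :
    ∃ (M' : Type) (_ : Fintype M') (M : Finset M') (f' : M' → Fin n → X) (D' : M' → MatPow d n),
      IsCode W lam M f' D' ∧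
      (∀ m ∈ M, f' m ∈ A ∧ (D' m).trace.re ≤ (Q (f' m)).trace.re) ∧ #M = k := by
  refine ⟨Option (Fin k), inferInstance, univ.map .some, fun o => o.elim xs₀ f,
    fun o => o.elim (1 - ∑ m, D m) D, ⟨?_, ?_, ?_⟩, ?_, ?_⟩
  · exact Option.forall.2 ⟨le_iff.1 h.sum_le_one, fun m => nonneg_iff_posSemidef.1 (h.nonneg m)⟩
  · rw [Fintype.sum_option]
    exact sub_add_cancel _ _
  · exact forall_mem_map.2 fun m _ => h.success m
  · simp only [← tracePairing_one]
    exact forall_mem_map.2 fun m _ => ⟨h.mem m, h.trace_le m⟩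
  · rw [card_map, card_univ, Fintype.card_fin]

end Subcode

section Averaging

variable {X : Type*} [Fintype X] {d n : ℕ} {P : X → ℝ} {W : X → Mat d}

lemma isState_avgState (hP : IsProbDist P) (hW : ∀ x, IsState (W x)) : IsState (avgState P W) := by
  refine ⟨posSemidef_sum _ fun x _ => (hW x).1.smul (Complex.zero_le_real.2 (hP.1 x)), ?_⟩
  simp only [avgState, trace_sum, trace_smul, (hW _).2, smul_eq_mul, mul_one]
  rw [← Complex.ofReal_sum, hP.2, Complex.ofReal_one]

lemma tensorPow_avgState (P : X → ℝ) (W : X → Mat d) :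
    (tensorPow fun _ : Fin n => avgState P W) =
      ∑ xs : Fin n → X, (∏ i, P (xs i)) • tensorPow fun i => W (xs i) := by
  simp only [avgState, Complex.coe_smul, tensorPow_sum, tensorPow_smul]

lemma IsState.tensorPow {ρ : Fin n → Mat d} (hρ : ∀ i, IsState (ρ i)) : IsState (tensorPow ρ) := by
  choose π hπ using fun i => (hρ i).exists_isSpectralDecomp
  exact (IsSpectralDecomp.tensorPow hπ).isState

lemma isShadow_tensorPow_avgState (hP : IsProbDist P) (hW : ∀ x, IsState (W x))
    {A : Finset (Fin n → X)} {τ η : ℝ} (hA : τ ≤ prodProb P A) (hη : 0 ≤ η) {B : MatPow d n}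
    (hB : 0 ≤ B) (hB1 : B ≤ 1) (h : ∀ xs ∈ A, η ≤ tracePairing (tensorPow fun i => W (xs i)) B) :
    IsShadow (tensorPow fun _ => avgState P W) B (τ * η) := by
  refine ⟨nonneg_iff_posSemidef.1 hB, le_iff.1 hB1, ?_⟩
  have h_prob (xs : Fin n → X) : 0 ≤ ∏ i, P (xs i) := prod_nonneg fun i _ => hP.1 (xs i)
  calc τ * η ≤ prodProb P A * η := by gcongr
    _ = ∑ xs ∈ A, (∏ i, P (xs i)) * η := sum_mul _ _ _
    _ ≤ ∑ xs ∈ A, (∏ i, P (xs i)) * tracePairing (tensorPow fun i => W (xs i)) B :=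
        sum_le_sum fun xs hxs => mul_le_mul_of_nonneg_left (h xs hxs) (h_prob xs)
    _ ≤ ∑ xs : Fin n → X, (∏ i, P (xs i)) * tracePairing (tensorPow fun i => W (xs i)) B :=
        sum_le_univ_sum_of_nonneg fun xs =>
          mul_nonneg (h_prob xs)
            (tracePairing_nonneg (IsState.tensorPow fun i => hW (xs i)).nonneg hB)
    _ = tracePairing (tensorPow fun _ => avgState P W) B := by
        simp only [tensorPow_avgState, map_sum, map_smul, LinearMap.sum_apply,
          LinearMap.smul_apply, smul_eq_mul]

lemma le_tracePairing_one_of_forall_mem (hP : IsProbDist P) (hW : ∀ x, IsState (W x))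
    {A : Finset (Fin n → X)} {τ η : ℝ} (hτ : 0 < τ) (hA : τ ≤ prodProb P A) (hη : 0 < η)
    {B : MatPow d n} (hB : 0 ≤ B) (hB1 : B ≤ 1)
    (h : ∀ xs ∈ A, η ≤ tracePairing (tensorPow fun i => W (xs i)) B) :
    τ * η / 2 *
        (2 : ℝ) ^ (n * vnEntropy (avgState P W) - √(d * Kconst ^ 2 / (τ * η / 2)) * √n) ≤
      tracePairing 1 B := by
  obtain ⟨π, hπ⟩ := (isState_avgState hP hW).exists_isSpectralDecomp
  have h_trace := (isShadow_tensorPow_avgState hP hW hA hη.le hB hB1 h).le_trace hπ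
    (mul_pos hτ hη)
  rwa [Fintype.card_fin, ← hπ.vnEntropy_eq, ← tracePairing_one] at h_trace

end Averaging

section CodeConstruction

/-- The coefficient of `√n` lost against `n * I(P; W)` by the greedy code with error `lam`: in turn,
the fluctuation of the output distribution on a shadow of mass `τ / 2 * (lam ^ 2 / 9)`, the
conditional typicality constant, the fluctuation of the codeword entropies, and the shadow mass. -/
def rateLoss (a d : ℕ) (lam τ δ : ℝ) : ℝ :=
  √(d * Kconst ^ 2 / (τ / 2 * (lam ^ 2 / 9) / 2)) + δ * Kconst * (a * d) +
    √((d * Kconst) ^ 2 / (τ / 2)) + |Real.logb 2 (τ / 2 * (lam ^ 2 / 9) / 2)|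

lemma two_rpow_neg_abs_logb_mul_le {c s : ℝ} (hc : 0 < c) (hs : 1 ≤ s) :
    (2 : ℝ) ^ (-(|Real.logb 2 c| * s)) ≤ c := by
  calc (2 : ℝ) ^ (-(|Real.logb 2 c| * s)) ≤ (2 : ℝ) ^ Real.logb 2 c := by
        refine Real.rpow_le_rpow_of_exponent_le one_le_two ?_
        linarith [le_mul_of_one_le_right (abs_nonneg (Real.logb 2 c)) hs,
          neg_abs_le (Real.logb 2 c)]
    _ = c := Real.rpow_logb two_pos (by norm_num) hc

lemma two_rpow_sub_rateLoss_mul_le (a d : ℕ) {lam τ δ : ℝ} (hlam : 0 < lam) (hτ : 0 < τ)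
    (H I C : ℝ) (hI : I = H - C) {s : ℝ} (hs : 1 ≤ s) :
    (2 : ℝ) ^ (I - rateLoss a d lam τ δ * s) *
        (2 : ℝ) ^ (C + √((d * Kconst) ^ 2 / (τ / 2)) * s + δ * Kconst * (a * d) * s) ≤
      τ / 2 * (lam ^ 2 / 9) / 2 *
        (2 : ℝ) ^ (H - √(d * Kconst ^ 2 / (τ / 2 * (lam ^ 2 / 9) / 2)) * s) := by
  have hc : 0 < τ / 2 * (lam ^ 2 / 9) / 2 := by positivity
  refine le_trans (le_of_eq ?_)
    (mul_le_mul_of_nonneg_right (two_rpow_neg_abs_logb_mul_le hc hs) (by positivity))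
  rw [← Real.rpow_add two_pos, ← Real.rpow_add two_pos, rateLoss, hI]
  congr 1
  ring

lemma exists_pos_mul_one_div_sq_le (b : ℝ) {ε : ℝ} (hε : 0 < ε) :
    ∃ δ : ℝ, 0 < δ ∧ b * (1 / δ ^ 2) ≤ ε := by
  refine ⟨√(|b| / ε + 1), Real.sqrt_pos.2 (by positivity), ?_⟩
  rw [Real.sq_sqrt (by positivity), mul_one_div, div_le_iff₀ (by positivity), mul_add,
    mul_div_cancel₀ _ hε.ne']
  linarith [le_abs_self b]

variable {X : Type*} [Fintype X] {d n : ℕ} {P : X → ℝ} {W : X → Mat d} {q : X → Fin d → ℝ}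
  {π : X → Fin d → Mat d} {δ lam τ : ℝ}

lemma condEntropy_eq (P : X → ℝ) (hW : ∀ x, IsSpectralDecomp (W x) (q x) (π x)) :
    condEntropy P W = ∑ x, P x * shannonEntropy (q x) := by
  simp only [condEntropy, (hW _).vnEntropy_eq]

lemma exists_subset_tracePairing_one_condTypicalProj_le
    (hW : ∀ x, IsSpectralDecomp (W x) (q x) (π x)) (hP : IsProbDist P) (hδ : 0 ≤ δ) (hτ : 0 < τ)
    {A : Finset (Fin n → X)} (hA : τ ≤ prodProb P A) :
    ∃ A' ⊆ A, τ / 2 ≤ prodProb P A' ∧ ∀ xs ∈ A', tracePairing 1 (condTypicalProj xs q π δ) ≤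
      (2 : ℝ) ^ (n * condEntropy P W + √((d * Kconst) ^ 2 / (τ / 2)) * √n +
        δ * Kconst * (Fintype.card X * d) * √n) := by
  have h_second : ∑ x, P x * shannonEntropy (q x) ^ 2 ≤ (d * Kconst) ^ 2 :=
    hP.sum_mul_le fun x => by
      rw [← sq_abs]
      gcongr
      simpa only [Fintype.card_fin] using (hW x).isProbDist.abs_shannonEntropy_le
  obtain ⟨A', hA'A, hA', h_entropy⟩ := hP.exists_subset_sum_le h_second hτ hA
  refine ⟨A', hA'A, hA', fun xs hxs => (tracePairing_one_condTypicalProj_le hW hδ xs).trans ?_⟩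
  rw [condEntropy_eq P hW]
  gcongr
  · exact one_le_two
  · exact h_entropy xs hxs

lemma exists_isSubcode_two_rpow_le (hW : ∀ x, IsSpectralDecomp (W x) (q x) (π x))
    (hP : IsProbDist P) (hn : 0 < n) (hlam : 0 < lam) (hτ : 0 < τ) (hδ : 0 < δ)
    (hδ_lam : Fintype.card X * d * (1 / δ ^ 2) ≤ lam / 3) {A : Finset (Fin n → X)}
    (hA : τ ≤ prodProb P A) :
    ∃ (k : ℕ) (f : Fin k → Fin n → X) (D : Fin k → MatPow d n),
      IsSubcode (fun xs => tensorPow fun i => W (xs i)) (fun xs => condTypicalProj xs q π δ)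
        A lam f D ∧
      (2 : ℝ) ^ (n * mutualInfo P W - rateLoss (Fintype.card X) d lam τ δ * √n) ≤ k := by
  obtain ⟨A', hA'A, hA', h_trace⟩ :=
    exists_subset_tracePairing_one_condTypicalProj_le hW hP hδ.le hτ hA
  have hs : 1 ≤ √(n : ℝ) := Real.one_le_sqrt.2 (by exact_mod_cast hn)
  have h_state (xs : Fin n → X) : IsState (tensorPow fun i => W (xs i)) :=
    .tensorPow fun i => (hW (xs i)).isState
  have h_success (xs : Fin n → X) : 1 - lam / 3 ≤
      tracePairing (tensorPow fun i => W (xs i)) (condTypicalProj xs q π δ) :=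
    (sub_le_sub_left hδ_lam 1).trans (one_sub_le_tracePairing_condTypicalProj hW hδ xs)
  obtain ⟨k, f, D, h_code, hk⟩ := exists_isSubcode_le (A := A') hlam h_state
    (isStarProjection_condTypicalProj hW · δ) h_success (by positivity) h_trace
    fun B hB hB1 h_shadow =>
      (two_rpow_sub_rateLoss_mul_le (Fintype.card X) d hlam hτ _ _ _ (mul_sub _ _ _) hs).trans
        (le_tracePairing_one_of_forall_mem hP (fun x => (hW x).isState) (half_pos hτ) hA'
          (by positivity) hB hB1 h_shadow)
  exact ⟨k, f, D, h_code.mono (coe_subset.2 hA'A), hk⟩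

end CodeConstruction

/-- **Theorem 2 (Code construction).** For `λ, τ ∈ (0,1)` there exist `δ > 0` and a
constant `K(λ,τ,a,d)` such that for every cq-DMC `W`, distribution `P`, blocklength
`n` and set `A ⊆ X^n` with `P^{⊗n}(A) ≥ τ`, there is an `(n,λ)`-code `(f,D)` with
`f(m) ∈ A`, `Tr D_m ≤ Tr Π^n_{W,δ}(f(m))` for all `m ∈ M`, and
`|M| ≥ exp₂(n I(P;W) − K√n)`. -/
theorem code_construction (a d : ℕ) (lam τ : ℝ)
    (hlam : lam ∈ Set.Ioo (0 : ℝ) 1) (hτ : τ ∈ Set.Ioo (0 : ℝ) 1) :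
    ∃ δ : ℝ, 0 < δ ∧ ∃ K : ℝ,
      ∀ (X : Type) [Fintype X], Fintype.card X = a →
      ∀ (W : X → Mat d), (∀ x, IsState (W x)) →
      ∀ (q : X → Fin d → ℝ) (π : X → Fin d → Mat d),
        (∀ x, IsDiagonalization (W x) (q x) (π x)) →
      ∀ (P : X → ℝ), IsProbDist P →
      ∀ (n : ℕ), 0 < n →
      ∀ (A : Finset (Fin n → X)), τ ≤ prodProb P A →
        ∃ (M' : Type) (_ : Fintype M') (M : Finset M') (f : M' → Fin n → X)
          (D : M' → MatPow d n),
          IsCode W lam M f D ∧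
          (∀ m ∈ M, f m ∈ A ∧
            (Matrix.trace (D m)).re ≤ (Matrix.trace (condTypicalProj (f m) q π δ)).re) ∧
          exp2 ((n : ℝ) * mutualInfo P W - K * Real.sqrt n) ≤ (M.card : ℝ) := by
  obtain ⟨δ, hδ, hδ_lam⟩ := exists_pos_mul_one_div_sq_le (a * d : ℝ) (div_pos hlam.1 three_pos)
  refine ⟨δ, hδ, rateLoss a d lam τ δ, ?_⟩
  rintro X _ rfl W _ q π hd P hP n hn A hA
  have hW (x : X) : IsSpectralDecomp (W x) (q x) (π x) := (hd x).isSpectralDecomp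
  obtain ⟨xs₀, -⟩ : A.Nonempty := nonempty_of_sum_ne_zero (hτ.1.trans_le hA).ne'
  obtain ⟨k, f, D, h_subcode, hk⟩ := exists_isSubcode_two_rpow_le hW hP hn hlam.1 hτ.1 hδ hδ_lam
    hA
  obtain ⟨M', _, M, f', D', h_code, h_mem, rfl⟩ := h_subcode.exists_isCode xs₀
  exact ⟨M', _, M, f', D', h_code, h_mem, hk⟩
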